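/- Let E be the Euclidean plane (EuclideanSpace ℝ (Fin 2)). Let a, b ∈ E with a ≠ b, and let c, d, p, q ∈ E all lie in the open lens of (a,b), i.e. each of c, d, p, q is at distance < dist a b from both a and b. Suppose moreover that a ∉ lens(p,q) (i.e. dist a p ≥ dist p q or dist a q ≥ dist p q), that c and p lie weakly on the same side of the affine line through a and b, and that d and q lie weakly on the same side of that line. Then every edge of each of the six triangles {a,c,p}, {b,c,p}, {a,p,q}, {b,p,q}, {a,d,q}, {b,d,q} has length strictly less than dist a b; in particular dist p q < dist a b, dist c p < dist a b and dist d q < dist a b. -/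

import Mathlib

/-!
Orthogonal projection onto the line `ab` does not increase the distances to `a` and `b`, so a point
of the lens of `(a, b)` projects into the segment `ab`. Let `x` and `y` be two points of the lens on
the same side of the line, with `x` at most as far from it as `y`. The components of `x` and `y`
normal to the line lie on a common ray, so their difference is no longer than the component of `y`:
replacing `x` by its foot `x'` on the line does not decrease the distance to `y`. As `x'` lies
between `a` and `b`, convexity of the distance gives
`dist x y ≤ dist x' y ≤ max (dist a y) (dist b y) < dist a b`.
-/

open AffineSubspace EuclideanGeometry

section NormedSpace

variable {V P : Type*} [NormedAddCommGroup V] [NormedSpace ℝ V] [MetricSpace P]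
  [NormedAddTorsor V P]

theorem eq_of_wbtw_of_dist_le {a b z : P} (h : Wbtw ℝ a b z) (hz : dist a z ≤ dist a b) :
    b = z := by
  have hsum := h.dist_add_dist
  exact dist_le_zero.mp (by linarith)

theorem wbtw_of_mem_affineSpan_pair_of_dist_le {a b z : P} (hz : z ∈ line[ℝ, a, b])
    (hza : dist z a ≤ dist a b) (hzb : dist z b ≤ dist a b) : Wbtw ℝ a z b := by
  have hcol : Collinear ℝ {z, a, b} := collinear_insert_of_mem_affineSpan_pair hz
  rcases hcol.wbtw_or_wbtw_or_wbtw with hzab | habz | hbza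
  · obtain rfl : a = z :=
      eq_of_wbtw_of_dist_le hzab.symm (by rwa [dist_comm b z, dist_comm b a])
    exact wbtw_self_left ℝ a b
  · obtain rfl : b = z := eq_of_wbtw_of_dist_le habz (by rwa [dist_comm])
    exact wbtw_self_right ℝ a b
  · exact hbza.symm

end NormedSpace

section Lens

variable {V P : Type*} [NormedAddCommGroup V] [InnerProductSpace ℝ V] [MetricSpace P]
  [NormedAddTorsor V P]

section OrthogonalProjection

variable {s : AffineSubspace ℝ P} [Nonempty s] [s.direction.HasOrthogonalProjection] {x y : P}

theorem sameRay_vsub_orthogonalProjection_of_wSameSide (h : s.WSameSide x y) :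
    SameRay ℝ (x -ᵥ (orthogonalProjection s x : P)) (y -ᵥ (orthogonalProjection s y : P)) := by
  obtain ⟨p, hp, q, hq, hray⟩ := h
  have hnormal {z r : P} (hr : r ∈ s) :
      z -ᵥ (orthogonalProjection s z : P) = s.directionᗮ.starProjection (z -ᵥ r) := by
    rw [orthogonalProjection_apply_mem s hr, vsub_vadd_eq_vsub_sub,
      Submodule.starProjection_orthogonal_val]
    rfl
  rw [hnormal hp, hnormal hq]
  exact hray.map s.directionᗮ.starProjection.toLinearMap

variable (s x y) in
theorem dist_sq_eq_dist_orthogonalProjection_sq_add_norm_sub_sq :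
    dist x y ^ 2 =
      dist (orthogonalProjection s x : P) (orthogonalProjection s y : P) ^ 2 +
        ‖(x -ᵥ (orthogonalProjection s x : P)) - (y -ᵥ (orthogonalProjection s y : P))‖ ^ 2 := by
  set x' : P := ↑(orthogonalProjection s x)
  set y' : P := ↑(orthogonalProjection s y)
  have hdir : x' -ᵥ y' ∈ s.direction :=
    vsub_mem_direction (orthogonalProjection_mem x) (orthogonalProjection_mem y)
  have hnormal : (x -ᵥ x') - (y -ᵥ y') ∈ s.directionᗮ :=
    sub_mem (vsub_orthogonalProjection_mem_direction_orthogonal s x)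
      (vsub_orthogonalProjection_mem_direction_orthogonal s y)
  have hsplit : x -ᵥ y = (x' -ᵥ y') + ((x -ᵥ x') - (y -ᵥ y')) := by
    rw [vsub_sub_vsub_comm]
    abel
  rw [dist_eq_norm_vsub V x y, dist_eq_norm_vsub V x' y', hsplit, sq, sq, sq]
  exact norm_add_sq_eq_norm_sq_add_norm_sq_real
    (Submodule.inner_right_of_mem_orthogonal hdir hnormal)

theorem dist_orthogonalProjection_le_of_mem {p : P} (hp : p ∈ s) :
    dist (orthogonalProjection s x : P) p ≤ dist x p := by
  have hpyth := dist_sq_eq_dist_orthogonalProjection_sq_add_dist_orthogonalProjection_sq x hp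
  rw [dist_comm _ p, dist_comm _ p]
  exact le_of_sq_le_sq (by nlinarith) dist_nonneg

theorem dist_le_dist_orthogonalProjection_of_wSameSide (h : s.WSameSide x y)
    (hxy : dist x (orthogonalProjection s x) ≤ dist y (orthogonalProjection s y)) :
    dist x y ≤ dist (orthogonalProjection s x : P) y := by
  set x' : P := ↑(orthogonalProjection s x)
  set y' : P := ↑(orthogonalProjection s y)
  have hray : SameRay ℝ (x -ᵥ x') (y -ᵥ y') := sameRay_vsub_orthogonalProjection_of_wSameSide h
  have hheight : ‖(x -ᵥ x') - (y -ᵥ y')‖ ≤ dist y y' := by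
    rw [hray.norm_sub, ← dist_eq_norm_vsub, ← dist_eq_norm_vsub, abs_le]
    constructor <;> linarith [dist_nonneg (x := x) (y := x')]
  refine le_of_sq_le_sq ?_ dist_nonneg
  calc
    dist x y ^ 2 = dist x' y' ^ 2 + ‖(x -ᵥ x') - (y -ᵥ y')‖ ^ 2 :=
      dist_sq_eq_dist_orthogonalProjection_sq_add_norm_sub_sq s x y
    _ ≤ dist x' y' ^ 2 + dist y y' ^ 2 := by gcongr
    _ = dist x' y ^ 2 := by
      simpa only [sq] using
        (dist_sq_eq_dist_orthogonalProjection_sq_add_dist_orthogonalProjection_sq y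
          (orthogonalProjection_mem x)).symm

end OrthogonalProjection

/-- The open lens of the pair `(u, v)`: the intersection of the two open balls of radius
`dist u v` centred at `u` and at `v`. -/
def lens (u v : P) : Set P :=
  {z | dist z u < dist u v ∧ dist z v < dist u v}

variable {a b x y : P}

theorem wbtw_orthogonalProjection_of_mem_lens (hx : x ∈ lens a b) :
    Wbtw ℝ a (orthogonalProjection line[ℝ, a, b] x : P) b :=
  wbtw_of_mem_affineSpan_pair_of_dist_le (orthogonalProjection_mem x)
    ((dist_orthogonalProjection_le_of_mem (left_mem_affineSpan_pair ℝ a b)).trans hx.1.le)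
    ((dist_orthogonalProjection_le_of_mem (right_mem_affineSpan_pair ℝ a b)).trans hx.2.le)

theorem dist_lt_of_mem_lens_of_wSameSide (hx : x ∈ lens a b) (hy : y ∈ lens a b)
    (h : line[ℝ, a, b].WSameSide x y) : dist x y < dist a b := by
  wlog hxy : dist x (orthogonalProjection line[ℝ, a, b] x) ≤
    dist y (orthogonalProjection line[ℝ, a, b] y) generalizing x y
  · rw [dist_comm]
    exact this hy hx h.symm (le_of_not_ge hxy)
  calc
    dist x y ≤ dist (orthogonalProjection line[ℝ, a, b] x : P) y :=
      dist_le_dist_orthogonalProjection_of_wSameSide h hxy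
    _ ≤ max (dist a y) (dist b y) := (wbtw_orthogonalProjection_of_mem_lens hx).dist_le_max_dist y
    _ < dist a b := by
      rw [dist_comm a y, dist_comm b y]
      exact max_lt hy.1 hy.2

theorem case1_all_edges_short_general {c d p q : P}
    (hca : dist c a < dist a b) (hcb : dist c b < dist a b)
    (hda : dist d a < dist a b) (hdb : dist d b < dist a b)
    (hpa : dist p a < dist a b) (hpb : dist p b < dist a b)
    (hqa : dist q a < dist a b) (hqb : dist q b < dist a b)
    (ha_lens : dist a p ≥ dist p q ∨ dist a q ≥ dist p q)
    (hcp : line[ℝ, a, b].WSameSide c p) (hdq : line[ℝ, a, b].WSameSide d q) :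
    dist a c < dist a b ∧ dist a p < dist a b ∧ dist c p < dist a b ∧
    dist b c < dist a b ∧ dist b p < dist a b ∧
    dist a q < dist a b ∧ dist p q < dist a b ∧
    dist b q < dist a b ∧
    dist a d < dist a b ∧ dist d q < dist a b ∧ dist b d < dist a b := by
  have hcp_lt : dist c p < dist a b :=
    dist_lt_of_mem_lens_of_wSameSide ⟨hca, hcb⟩ ⟨hpa, hpb⟩ hcp
  have hdq_lt : dist d q < dist a b :=
    dist_lt_of_mem_lens_of_wSameSide ⟨hda, hdb⟩ ⟨hqa, hqb⟩ hdq
  rw [dist_comm] at hca hcb hda hdb hpa hpb hqa hqb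
  have hpq_lt : dist p q < dist a b := ha_lens.elim (·.trans_lt hpa) (·.trans_lt hqa)
  exact ⟨hca, hpa, hcp_lt, hcb, hpb, hqa, hpq_lt, hqb, hda, hdq_lt, hdb⟩

end Lens

/-- Conclusion of case 1 of Lemma 3: all edges of the six triangles
`acp, bcp, apq, bpq, adq, bdq` are strictly shorter than `dist a b`. -/
theorem case1_all_edges_short
    (a b c d p q : EuclideanSpace ℝ (Fin 2)) (hab : a ≠ b)
    (hca : dist c a < dist a b) (hcb : dist c b < dist a b)
    (hda : dist d a < dist a b) (hdb : dist d b < dist a b)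
    (hpa : dist p a < dist a b) (hpb : dist p b < dist a b)
    (hqa : dist q a < dist a b) (hqb : dist q b < dist a b)
    (ha_lens : dist a p ≥ dist p q ∨ dist a q ≥ dist p q)
    (hcp : AffineSubspace.WSameSide
      (affineSpan ℝ ({a, b} : Set (EuclideanSpace ℝ (Fin 2)))) c p)
    (hdq : AffineSubspace.WSameSide
      (affineSpan ℝ ({a, b} : Set (EuclideanSpace ℝ (Fin 2)))) d q) :
    dist a c < dist a b ∧ dist a p < dist a b ∧ dist c p < dist a b ∧
    dist b c < dist a b ∧ dist b p < dist a b ∧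
    dist a q < dist a b ∧ dist p q < dist a b ∧
    dist b q < dist a b ∧
    dist a d < dist a b ∧ dist d q < dist a b ∧ dist b d < dist a b :=
  case1_all_edges_short_general hca hcb hda hdb hpa hpb hqa hqb ha_lens hcp hdq
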